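/- Let α_1, …, α_r be an orthogonal sequence of long roots in Φ(g/p). Then for every β ∈ Φ(g/p) there are at most two distinct indices i ∈ {1, …, r} such that ⟨β, α_i⟩ ≥ 1. -/

import Mathlib

open scoped RealInnerProductSpace

/-- The Cartan pairing `⟨β, γ⟩ = 2(β,γ)/(γ,γ)`. -/
noncomputable def rpair {V : Type*} [NormedAddCommGroup V] [InnerProductSpace ℝ V]
    (β γ : V) : ℝ := 2 * ⟪β, γ⟫ / ⟪γ, γ⟫

/-- An irreducible reduced crystallographic root system in a real inner product space,
equipped with a base `Δ` of simple roots, the coefficient function `m` (so that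
`β = ∑_{δ ∈ Δ} m β δ • δ` for roots `β`) and the highest root `θ`. -/
structure IrredRootSystem (V : Type*) [NormedAddCommGroup V] [InnerProductSpace ℝ V] where
  Φ : Set V
  Δ : Finset V
  m : V → V → ℤ
  θ : V
  finite : Φ.Finite
  zero_notMem : (0 : V) ∉ Φ
  spans : Submodule.span ℝ Φ = ⊤
  neg_mem : ∀ β ∈ Φ, -β ∈ Φ
  reflect_mem : ∀ β ∈ Φ, ∀ γ ∈ Φ, β - rpair β γ • γ ∈ Φ
  crystallographic : ∀ β ∈ Φ, ∀ γ ∈ Φ, ∃ z : ℤ, rpair β γ = z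
  reduced : ∀ β ∈ Φ, ∀ t : ℝ, t • β ∈ Φ → t = 1 ∨ t = -1
  irreducible : ¬ ∃ A B : Set V, A.Nonempty ∧ B.Nonempty ∧ Disjoint A B ∧ A ∪ B = Φ ∧
      ∀ β ∈ A, ∀ γ ∈ B, ⟪β, γ⟫ = 0
  base_subset : ↑Δ ⊆ Φ
  base_indep : LinearIndependent ℝ (fun δ : Δ => (δ : V))
  base_repr : ∀ β ∈ Φ, β = ∑ δ ∈ Δ, (m β δ : ℝ) • δ
  base_sign : ∀ β ∈ Φ, (∀ δ ∈ Δ, 0 ≤ m β δ) ∨ (∀ δ ∈ Δ, m β δ ≤ 0)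
  theta_mem : θ ∈ Φ
  theta_highest : ∀ β ∈ Φ, ∀ δ ∈ Δ, m β δ ≤ m θ δ

namespace IrredRootSystem

variable {V : Type*} [NormedAddCommGroup V] [InnerProductSpace ℝ V]

/-- The positive roots `Φ⁺`. -/
def Pos (D : IrredRootSystem V) : Set V := {β | β ∈ D.Φ ∧ ∀ δ ∈ D.Δ, 0 ≤ D.m β δ}

/-- The negative roots `Φ⁻`. -/
def Neg (D : IrredRootSystem V) : Set V := {β | β ∈ D.Φ ∧ ∀ δ ∈ D.Δ, D.m β δ ≤ 0}

/-- A long root: a root of maximal squared length. -/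
def IsLong (D : IrredRootSystem V) (β : V) : Prop :=
  β ∈ D.Φ ∧ ∀ γ ∈ D.Φ, ⟪γ, γ⟫ ≤ ⟪β, β⟫

/-- `Φ(g/p)`: the roots whose coefficient on the cominuscule simple root `α` is `1`. -/
def gp (D : IrredRootSystem V) (α : V) : Set V := {β | β ∈ D.Φ ∧ D.m β α = 1}

/-- An orthogonal sequence of long roots in `Φ(g/p)`. -/
def IsOrthLongSeq (D : IrredRootSystem V) (α : V) {r : ℕ} (a : Fin r → V) : Prop :=
  (∀ i, D.IsLong (a i)) ∧ (∀ i, a i ∈ D.gp α) ∧ ∀ i j, i ≠ j → ⟪a i, a j⟫ = 0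

end IrredRootSystem

/-!
Reflecting a root `β` successively in pairwise orthogonal roots `γ` yields the root
`β - ∑ ⟨β, γ⟩ γ`. Its coefficient on a simple root `α` is at least `-m_α(θ)`, and coefficients are
linear, so `∑ ⟨β, γ⟩ m_α(γ) ≤ m_α(β) + m_α(θ)`. When every `γ` has positive coefficient on `α`,
each `γ` with `⟨β, γ⟩ ≥ 1` contributes at least `1` to the left-hand side; the right-hand side is
`2` in the cominuscule case.
-/

theorem rpair_sub_sum_smul_of_inner_eq_zero {V ι : Type*} [NormedAddCommGroup V]
    [InnerProductSpace ℝ V] {s : Finset ι} {a : ι → V} {γ : V}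
    (h : ∀ i ∈ s, ⟪a i, γ⟫ = 0) (β : V) (c : ι → ℝ) :
    rpair (β - ∑ i ∈ s, c i • a i) γ = rpair β γ := by
  have hsum : ⟪∑ i ∈ s, c i • a i, γ⟫ = 0 := by
    rw [sum_inner]
    exact Finset.sum_eq_zero fun i hi => by rw [real_inner_smul_left, h i hi, mul_zero]
  rw [rpair, rpair, inner_sub_left, hsum, sub_zero]

namespace IrredRootSystem

variable {V ι : Type*} [NormedAddCommGroup V] [InnerProductSpace ℝ V] (D : IrredRootSystem V)
  {s : Finset ι} {a : ι → V} {α β γ : V}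

theorem sub_sum_rpair_smul_mem (hβ : β ∈ D.Φ) (ha : ∀ i ∈ s, a i ∈ D.Φ)
    (horth : (s : Set ι).Pairwise fun i j => ⟪a i, a j⟫ = 0) :
    β - ∑ i ∈ s, rpair β (a i) • a i ∈ D.Φ := by
  classical
  induction s using Finset.induction_on with
  | empty => simpa using hβ
  | insert j s hj ih =>
    have hmem : β - ∑ i ∈ s, rpair β (a i) • a i ∈ D.Φ :=
      ih (fun i hi => ha i (Finset.mem_insert_of_mem hi))
        (horth.mono (Finset.coe_subset.2 (Finset.subset_insert j s)))
    have hpair : rpair (β - ∑ i ∈ s, rpair β (a i) • a i) (a j) = rpair β (a j) :=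
      rpair_sub_sum_smul_of_inner_eq_zero
        (fun i hi => horth (Finset.mem_insert_of_mem hi) (Finset.mem_insert_self j s)
          (ne_of_mem_of_not_mem hi hj)) β _
    rw [Finset.sum_insert hj]
    have hreflect := D.reflect_mem _ hmem (a j) (ha j (Finset.mem_insert_self j s))
    rwa [hpair, sub_sub, add_comm] at hreflect

theorem span_range_simple : Submodule.span ℝ (Set.range fun δ : D.Δ => (δ : V)) = ⊤ := by
  rw [eq_top_iff, ← D.spans, Submodule.span_le]
  intro γ hγ
  rw [D.base_repr γ hγ]
  exact Submodule.sum_mem _ fun δ hδ =>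
    Submodule.smul_mem _ _ (Submodule.subset_span ⟨⟨δ, hδ⟩, rfl⟩)

/-- The simple roots `Δ` as a basis of the ambient space. Its coordinate functionals extend the
coefficients `m`, which carry meaning only on roots, linearly to all vectors. -/
noncomputable def simpleBasis : Module.Basis D.Δ ℝ V :=
  Module.Basis.mk D.base_indep D.span_range_simple.ge

theorem simpleBasis_coord_apply (hγ : γ ∈ D.Φ) (δ : D.Δ) :
    D.simpleBasis.coord δ γ = D.m γ δ := by
  have hsum : γ = ∑ ε : D.Δ, (D.m γ ε : ℝ) • D.simpleBasis ε := by
    simp only [simpleBasis, Module.Basis.mk_apply]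
    rw [Finset.sum_coe_sort D.Δ fun ε => (D.m γ ε : ℝ) • ε]
    exact D.base_repr γ hγ
  rw [Module.Basis.coord_apply]
  conv_lhs => rw [hsum, Module.Basis.repr_sum_self]

theorem m_neg (hγ : γ ∈ D.Φ) (hα : α ∈ D.Δ) : D.m (-γ) α = -D.m γ α := by
  have h := map_neg (D.simpleBasis.coord ⟨α, hα⟩) γ
  rw [D.simpleBasis_coord_apply (D.neg_mem γ hγ), D.simpleBasis_coord_apply hγ] at h
  exact_mod_cast h

theorem neg_m_theta_le_m (hγ : γ ∈ D.Φ) (hα : α ∈ D.Δ) : -D.m D.θ α ≤ D.m γ α := by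
  have h := D.theta_highest (-γ) (D.neg_mem γ hγ) α hα
  rw [D.m_neg hγ hα] at h
  exact neg_le.1 h

theorem sum_rpair_mul_m_le (hα : α ∈ D.Δ) (hβ : β ∈ D.Φ) (ha : ∀ i ∈ s, a i ∈ D.Φ)
    (horth : (s : Set ι).Pairwise fun i j => ⟪a i, a j⟫ = 0) :
    ∑ i ∈ s, rpair β (a i) * D.m (a i) α ≤ D.m β α + D.m D.θ α := by
  have hmem := D.sub_sum_rpair_smul_mem hβ ha horth
  have hcoeff : (D.m (β - ∑ i ∈ s, rpair β (a i) • a i) α : ℝ) =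
      D.m β α - ∑ i ∈ s, rpair β (a i) * D.m (a i) α := by
    rw [← D.simpleBasis_coord_apply hmem ⟨α, hα⟩, map_sub, map_sum,
      D.simpleBasis_coord_apply hβ]
    congr 1
    refine Finset.sum_congr rfl fun i hi => ?_
    rw [map_smul, D.simpleBasis_coord_apply (ha i hi), smul_eq_mul]
  have hlower : -(D.m D.θ α : ℝ) ≤ D.m (β - ∑ i ∈ s, rpair β (a i) • a i) α :=
    mod_cast D.neg_m_theta_le_m hmem hα
  linarith

end IrredRootSystem

theorem at_most_two_pairing_pos_general {V ι : Type*} [NormedAddCommGroup V]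
    [InnerProductSpace ℝ V] (D : IrredRootSystem V) {α : V} (hα : α ∈ D.Δ)
    {s : Finset ι} {a : ι → V} (ha : ∀ i ∈ s, a i ∈ D.Φ) (hpos : ∀ i ∈ s, 0 < D.m (a i) α)
    (horth : (s : Set ι).Pairwise fun i j => ⟪a i, a j⟫ = 0)
    {β : V} (hβ : β ∈ D.Φ) (hpair : ∀ i ∈ s, 1 ≤ rpair β (a i)) :
    (s.card : ℤ) ≤ D.m β α + D.m D.θ α := by
  have hterm : ∀ i ∈ s, 1 ≤ rpair β (a i) * D.m (a i) α := fun i hi =>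
    one_le_mul_of_one_le_of_one_le (hpair i hi) (mod_cast hpos i hi)
  have hcard : (s.card : ℝ) ≤ D.m β α + D.m D.θ α :=
    calc (s.card : ℝ) = ∑ _i ∈ s, (1 : ℝ) := by rw [Finset.sum_const, nsmul_one]
      _ ≤ ∑ i ∈ s, rpair β (a i) * D.m (a i) α := Finset.sum_le_sum hterm
      _ ≤ D.m β α + D.m D.θ α := D.sum_rpair_mul_m_le hα hβ ha horth
  exact_mod_cast hcard

/-- For an orthogonal sequence of long roots in `Φ(g/p)` and any
`β ∈ Φ(g/p)`, there are at most two indices `i` with `⟨β, α_i⟩ ≥ 1`. -/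
theorem at_most_two_pairing_pos {V : Type*} [NormedAddCommGroup V]
    [InnerProductSpace ℝ V] (D : IrredRootSystem V)
    (α : V) (hα : α ∈ D.Δ) (hcom : D.m D.θ α = 1)
    {r : ℕ} (a : Fin r → V) (ha : D.IsOrthLongSeq α a)
    (β : V) (hβ : β ∈ D.gp α) :
    {i : Fin r | 1 ≤ rpair β (a i)}.ncard ≤ 2 := by
  classical
  have hcard := at_most_two_pairing_pos_general D hα (s := {i | 1 ≤ rpair β (a i)}.toFinset)
    (fun i _ => (ha.2.1 i).1) (fun i _ => (ha.2.1 i).2 ▸ one_pos)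
    (fun i _ j _ => ha.2.2 i j) hβ.1 fun _ => Set.mem_toFinset.1
  rw [← Set.ncard_eq_toFinset_card', hβ.2, hcom] at hcard
  exact_mod_cast hcard
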